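/- Fix β ∈ (0,2) and t₁, t₂ ∈ (0,∞). For s ∈ (0, min(t₁,t₂)] and R > 0, let 𝒯_s(R) = ∫_0^s dr ∫_{(ℝ²)^6} φ_{t₁,R}(s,y) φ_{t₂,R}(s,z) φ_{t₁,R}(s,y′) φ_{t₂,R}(s,z′) ‖y−z‖^{−β} ‖y′−z′‖^{−β} ‖γ−γ′‖^{−β} G_{s−r}(z−γ) G_{s−r}(z′−γ′) dγ dγ′ dy dz dy′ dz′. Then there is a constant C depending only on β, t₁, t₂ (not on R or s) such that sup_{0 < s ≤ min(t₁,t₂)} 𝒯_s(R) ≤ C · R^{8−3β} for all R ≥ t₁ + t₂. -/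

import Mathlib

/-!
Every factor of the integrand is nonnegative, so the iterated Bochner integral is bounded by the
corresponding iterated lower Lebesgue integral (`enorm_integral_le_mul`), where Tonelli's theorem
applies freely.

Let `T = t₁ + t₂ ≤ R`, let `N` be the mass of the wave kernel at time `T`, which is finite by
`lintegral_G_one_lt_top`, and let `K` be the integral of `‖x‖ ^ (-β)` over the ball of radius `6 R`.
By scaling, `K` is a constant times `R ^ (2 - β)` (`lintegral_riesz_scaling`), and the constant is
finite because `β < 2` (`lintegral_riesz_lt_top`). Each `phi` is at most `N` and vanishes outside
the ball of radius `2 R` (`enorm_phi_le`). Hence: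

* the integrals over `y` and `y'` contribute at most `K` each;
* the integral over `z'` turns `G (z' - γ')` into at most `N` and confines `γ'` to the ball of
  radius `3 R`;
* `γ` lies in that ball too, so the integral over `γ'` of `‖γ - γ'‖ ^ (-β)` is at most `K`;
* the integral over `γ` of `G (z - γ)` is at most `N`, and `z` ranges over a ball of area `4 π R²`.

Altogether, including the factor at most `N ^ 4` from the four `phi`, the integral is bounded by
`N ^ 6 * K ^ 3 * 4 π R²` for each `r`, which is a constant times `R ^ (8 - 3 β)`; the integration
in `r` adds a factor `s ≤ t₁`.
-/

open MeasureTheory Real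

noncomputable section

/-- `ℝ²` with the Euclidean norm. -/
abbrev E2 : Type := EuclideanSpace ℝ (Fin 2)

/-- The fundamental solution of the 2D wave equation. -/
def G (t : ℝ) (x : E2) : ℝ :=
  if ‖x‖ < t then (2 * π * Real.sqrt (t ^ 2 - ‖x‖ ^ 2))⁻¹ else 0

/-- `φ_{t,R}(s,y) = ∫_{B_R} G_{t-s}(x-y) dx`. -/
def phi (t R s : ℝ) (y : E2) : ℝ :=
  ∫ x in Metric.closedBall (0 : E2) R, G (t - s) (x - y)

/-! ### The wave kernel and the Riesz kernel -/

theorem G_nonneg (t : ℝ) (x : E2) : 0 ≤ G t x := by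
  unfold G; split_ifs <;> positivity

theorem measurable_G (t : ℝ) : Measurable (G t) := by
  unfold G
  refine Measurable.ite (measurableSet_lt (by fun_prop) (by fun_prop)) (by fun_prop) (by fun_prop)

theorem lintegral_comp_inv_smul {f : E2 → ENNReal} (hf : Measurable f) {u : ℝ} (hu : 0 < u) :
    ∫⁻ x, f (u⁻¹ • x) = ENNReal.ofReal (u ^ 2) * ∫⁻ x, f x := by
  have h := Measure.map_addHaar_smul (volume : Measure E2) (inv_ne_zero hu.ne')
  rw [← lintegral_map hf (measurable_const_smul u⁻¹), h, lintegral_smul_measure]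
  simp [abs_of_pos hu]

theorem G_scaling {u : ℝ} (hu : 0 < u) (x : E2) : G u x = u⁻¹ * G 1 (u⁻¹ • x) := by
  have h1 : ‖u⁻¹ • x‖ = ‖x‖ / u := by
    rw [norm_smul, norm_inv, Real.norm_of_nonneg hu.le]; ring
  have h2 : ‖x‖ / u < 1 ↔ ‖x‖ < u := by rw [div_lt_one hu]
  unfold G
  rw [h1]
  simp only [h2]
  split_ifs with h
  · have h3 : u ^ 2 - ‖x‖ ^ 2 = u ^ 2 * (1 ^ 2 - (‖x‖ / u) ^ 2) := by field_simp
    rw [h3, Real.sqrt_mul (sq_nonneg u), Real.sqrt_sq hu.le, mul_inv, mul_inv, mul_inv]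
    ring
  · simp

/-- In polar coordinates the mass of `G 1` is `∫₀¹ r (1 - r²)^{-1/2} dr`, whose integrand is
dominated by `(1 - r)^{-1/2}`. -/
theorem lintegral_G_one_lt_top : ∫⁻ x : E2, ENNReal.ofReal (G 1 x) < ⊤ := by
  have h : IntegrableOn (fun y : ℝ => y ^ (Module.finrank ℝ E2 - 1) •
      (2 * π * Real.sqrt (1 ^ 2 - y ^ 2))⁻¹) (Set.Ioo 0 1) := by
    have h0 : IntegrableOn (fun y : ℝ => (1 - y) ^ (-(1/2) : ℝ)) (Set.Ioo 0 1) := by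
      have := (intervalIntegral.intervalIntegrable_rpow' (a := 0) (b := 1)
        (r := -(1/2)) (by norm_num)).comp_sub_left 1
      simp only [sub_zero, sub_self] at this
      have := this.symm
      rw [intervalIntegrable_iff_integrableOn_Ioo_of_le zero_le_one] at this
      exact this
    refine Integrable.mono' h0 (by fun_prop) ?_
    refine (ae_restrict_iff' measurableSet_Ioo).2 (Filter.Eventually.of_forall ?_)
    rintro y ⟨hy0, hy1⟩
    have hp : 0 < 1 - y := by linarith
    have e : (1 - y) ^ (-(1/2) : ℝ) = (Real.sqrt (1 - y))⁻¹ := by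
      rw [Real.rpow_neg hp.le, Real.sqrt_eq_rpow]
    have hs := Real.sqrt_pos.2 hp
    have hle : Real.sqrt (1 - y) ≤ Real.sqrt (1 ^ 2 - y ^ 2) := Real.sqrt_le_sqrt (by nlinarith)
    rw [e, Real.norm_of_nonneg (by positivity)]
    simp only [finrank_euclideanSpace, Fintype.card_fin, smul_eq_mul]
    calc y ^ (2 - 1) * (2 * π * √(1 ^ 2 - y ^ 2))⁻¹ ≤ 1 * (2 * π * √(1 ^ 2 - y ^ 2))⁻¹ := by
          gcongr; simpa using hy1.le
      _ ≤ (√(1 - y))⁻¹ := by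
          rw [one_mul]
          gcongr
          nlinarith [Real.pi_gt_three]
  rw [← integrableOn_fun_norm_addHaar (volume : Measure E2)
    (f := fun y : ℝ => (2 * π * Real.sqrt (1 ^ 2 - y ^ 2))⁻¹)] at h
  have h' : Integrable (G 1) := by
    rw [← integrable_indicator_iff measurableSet_ball] at h
    refine h.congr (Filter.Eventually.of_forall fun x => ?_)
    simp [G, Set.indicator]
  have := h'.lintegral_lt_top
  exact this

/-- The mass of `G u` is proportional to `u`; for `u ≤ 0` the kernel vanishes. -/
theorem lintegral_G_le (u : ℝ) :
    ∫⁻ x : E2, ENNReal.ofReal (G u x) ≤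
      ENNReal.ofReal u * ∫⁻ x : E2, ENNReal.ofReal (G 1 x) := by
  rcases le_or_gt u 0 with hu | hu
  · have : ∀ x, G u x = 0 := fun x => by
      unfold G; rw [if_neg]; have := norm_nonneg x; linarith
    simp [this]
  · have hm : Measurable fun x => ENNReal.ofReal (G 1 x) := (measurable_G 1).ennreal_ofReal
    simp_rw [G_scaling hu, ENNReal.ofReal_mul (inv_nonneg.2 hu.le)]
    rw [lintegral_const_mul' _ _ ENNReal.ofReal_ne_top, lintegral_comp_inv_smul hm hu, ← mul_assoc,
      ← ENNReal.ofReal_mul (inv_nonneg.2 hu.le)]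
    have : u⁻¹ * u ^ 2 = u := by field_simp
    rw [this]

theorem lintegral_riesz_lt_top {β : ℝ} (hβ2 : β < 2) :
    ∫⁻ x in Metric.closedBall (0 : E2) 1, ENNReal.ofReal (‖x‖ ^ (-β)) < ⊤ := by
  have h : LocallyIntegrable (fun x : E2 => ‖x‖ ^ (-β)) :=
    locallyIntegrable_of_norm_le_rpow (C := 1) (α := β) (by simp) (by simpa using hβ2)
      (Filter.Eventually.of_forall fun x => by
        rw [one_mul, Real.norm_of_nonneg (by positivity)])
      (Measurable.aestronglyMeasurable (by fun_prop))
  exact (h.integrableOn_isCompact (isCompact_closedBall _ _)).lintegral_lt_top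

theorem lintegral_riesz_scaling {β ρ : ℝ} (hρ : 0 < ρ) :
    ∫⁻ x in Metric.closedBall (0 : E2) ρ, ENNReal.ofReal (‖x‖ ^ (-β)) =
      ENNReal.ofReal (ρ ^ (2 - β)) *
        ∫⁻ x in Metric.closedBall (0 : E2) 1, ENNReal.ofReal (‖x‖ ^ (-β)) := by
  have hm : Measurable ((Metric.closedBall (0 : E2) 1).indicator
      fun x => ENNReal.ofReal (‖x‖ ^ (-β))) :=
    Measurable.indicator (by fun_prop) measurableSet_closedBall
  have e : ∀ x : E2, (Metric.closedBall (0 : E2) ρ).indicator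
      (fun x => ENNReal.ofReal (‖x‖ ^ (-β))) x = ENNReal.ofReal (ρ ^ (-β)) *
      (Metric.closedBall (0 : E2) 1).indicator
        (fun x => ENNReal.ofReal (‖x‖ ^ (-β))) (ρ⁻¹ • x) := by
    intro x
    have h1 : ‖ρ⁻¹ • x‖ = ρ⁻¹ * ‖x‖ := by
      rw [norm_smul, norm_inv, Real.norm_of_nonneg hρ.le]
    have h2 : ρ⁻¹ * ‖x‖ ≤ 1 ↔ ‖x‖ ≤ ρ := by rw [inv_mul_le_iff₀ hρ, mul_one]
    simp only [Set.indicator, Metric.mem_closedBall, dist_zero_right, h1, h2]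
    split_ifs
    · rw [← ENNReal.ofReal_mul (by positivity), ← Real.mul_rpow hρ.le (by positivity)]
      congr 2
      field_simp
    · simp
  rw [← lintegral_indicator measurableSet_closedBall, ← lintegral_indicator measurableSet_closedBall]
  simp_rw [e]
  rw [lintegral_const_mul' _ _ ENNReal.ofReal_ne_top, lintegral_comp_inv_smul hm hρ, ← mul_assoc,
      ← ENNReal.ofReal_mul (by positivity)]
  congr 2
  rw [← Real.rpow_natCast, ← Real.rpow_add hρ]
  congr 1; push_cast; ring

/-! ### The six-fold integral for abstract kernels -/

/-- Integrating out `y` first costs a factor `K`, because `h` does not depend on `y`. -/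
theorem lintegral_pair_le {a k h : E2 → ENNReal} (ma : Measurable a) (mk : Measurable k)
    (mh : Measurable h) (K : ENNReal)
    (ha : ∀ z, a z * ∫⁻ y, a y * k (y - z) ≤ a z * K) :
    ∫⁻ y, ∫⁻ z, a y * a z * k (y - z) * h z ≤ K * ∫⁻ z, a z * h z := by
  rw [lintegral_lintegral_swap (by dsimp only [Function.uncurry_def]; fun_prop),
    ← lintegral_const_mul _ (by fun_prop)]
  refine lintegral_mono fun z => ?_
  have : ∀ y, a y * a z * k (y - z) * h z = (a z * h z) * (a y * k (y - z)) := fun y => by ring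
  simp_rw [this]
  rw [lintegral_const_mul _ (by fun_prop)]
  calc a z * h z * ∫⁻ y, a y * k (y - z) = h z * (a z * ∫⁻ y, a y * k (y - z)) := by ring
    _ ≤ h z * (a z * K) := mul_le_mul_right (ha z) _
    _ = _ := by ring

theorem measurable_inner {k g : E2 → ENNReal} (mk : Measurable k) (mg : Measurable g) :
    Measurable fun p : E2 × E2 =>
      ∫⁻ γ, ∫⁻ γ', k (γ - γ') * g (p.1 - γ) * g (p.2 - γ') := by
  refine Measurable.lintegral_prod_right'
    (f := fun q : (E2 × E2) × E2 => ∫⁻ γ', k (q.2 - γ') * g (q.1.1 - q.2) * g (q.1.2 - γ')) ?_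
  refine Measurable.lintegral_prod_right'
    (f := fun q : ((E2 × E2) × E2) × E2 =>
      k (q.1.2 - q.2) * g (q.1.1.1 - q.1.2) * g (q.1.1.2 - q.2)) ?_
  fun_prop

/-- The integral over `z, z', γ, γ'`. Integrating first over `z'` removes one factor `g` and confines
`γ'` to the support of `b`; the `γ'`-integral of `k` is then at most `K`, the `γ`-integral of the
other factor `g` at most `N`, and the `z`-integral of `a` at most `V`. Hypothesis `hag` says that
`γ` lies in the support of `b` as soon as `a z * g (z - γ) ≠ 0`. -/
theorem inner_le {a b k g : E2 → ENNReal} (ma : Measurable a) (mb : Measurable b)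
    (mk : Measurable k) (mg : Measurable g) (K N V : ENNReal)
    (ha1 : ∀ z, a z ≤ 1)
    (hb : ∀ γ, b γ * ∫⁻ γ', k (γ - γ') * b γ' ≤ K)
    (hag : ∀ z γ, a z * g (z - γ) ≤ b γ * (a z * g (z - γ)))
    (hg : ∀ z, ∫⁻ γ, g (z - γ) ≤ N) (hg' : ∀ γ, ∫⁻ z, g (z - γ) ≤ N)
    (haV : ∫⁻ z, a z ≤ V) :
    ∫⁻ z, a z * ∫⁻ z', a z' * ∫⁻ γ, ∫⁻ γ', k (γ - γ') * g (z - γ) * g (z' - γ') ≤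
      N * N * K * V := by
  have key : ∀ z, ∫⁻ z', a z' * ∫⁻ γ, ∫⁻ γ', k (γ - γ') * g (z - γ) * g (z' - γ') ≤
      ∫⁻ γ, g (z - γ) * (N * ∫⁻ γ', k (γ - γ') * b γ') := by
    intro z
    have e : ∀ z', a z' * ∫⁻ γ, ∫⁻ γ', k (γ - γ') * g (z - γ) * g (z' - γ') =
        ∫⁻ γ, ∫⁻ γ', a z' * (k (γ - γ') * g (z - γ) * g (z' - γ')) := by
      intro z'
      rw [← lintegral_const_mul]
      · refine lintegral_congr fun γ => ?_
        rw [lintegral_const_mul _ (by fun_prop)]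
      · exact Measurable.lintegral_prod_right' (f := fun q : E2 × E2 =>
            k (q.1 - q.2) * g (z - q.1) * g (z' - q.2)) (by fun_prop)
    simp_rw [e]
    rw [lintegral_lintegral_swap]
    · refine lintegral_mono fun γ => ?_
      rw [lintegral_lintegral_swap (by dsimp only [Function.uncurry_def]; fun_prop),
        ← mul_assoc, ← lintegral_const_mul _ (by fun_prop)]
      refine lintegral_mono fun γ' => ?_
      have e2 : ∀ z', a z' * (k (γ - γ') * g (z - γ) * g (z' - γ')) =
        (k (γ - γ') * g (z - γ)) * (a z' * g (z' - γ')) := fun z' => by ring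
      simp_rw [e2]
      rw [lintegral_const_mul _ (by fun_prop)]
      have : ∫⁻ z', a z' * g (z' - γ') ≤ b γ' * N := by
        calc ∫⁻ z', a z' * g (z' - γ') ≤ ∫⁻ z', b γ' * g (z' - γ') := by
              refine lintegral_mono fun z' => (hag z' γ').trans ?_
              gcongr
              exact mul_le_of_le_one_left' (ha1 z')
          _ = b γ' * ∫⁻ z', g (z' - γ') := lintegral_const_mul _ (by fun_prop)
          _ ≤ _ := by gcongr; exact hg' γ'
      calc _ ≤ k (γ - γ') * g (z - γ) * (b γ' * N) := by gcongr
        _ = _ := by ring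
    · refine Measurable.aemeasurable ?_
      dsimp only [Function.uncurry_def]
      exact Measurable.lintegral_prod_right' (f := fun q : (E2 × E2) × E2 =>
        a q.1.1 * (k (q.1.2 - q.2) * g (z - q.1.2) * g (q.1.1 - q.2))) (by fun_prop)
  calc _ ≤ ∫⁻ z, a z * (N * (N * K)) := by
        refine lintegral_mono fun z => ?_
        calc _ ≤ a z * ∫⁻ γ, g (z - γ) * (N * ∫⁻ γ', k (γ - γ') * b γ') := by
              exact mul_le_mul_right (key z) _
          _ = ∫⁻ γ, a z * (g (z - γ) * (N * ∫⁻ γ', k (γ - γ') * b γ')) := by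
              rw [lintegral_const_mul]
              have : Measurable fun γ => ∫⁻ γ', k (γ - γ') * b γ' :=
                Measurable.lintegral_prod_right' (f := fun q : E2 × E2 =>
                  k (q.1 - q.2) * b q.2) (by fun_prop)
              fun_prop
          _ ≤ ∫⁻ γ, (a z * (N * K)) * g (z - γ) := by
              refine lintegral_mono fun γ => ?_
              calc _ = (a z * g (z - γ)) * (N * ∫⁻ γ', k (γ - γ') * b γ') := by ring
                _ ≤ (b γ * (a z * g (z - γ))) * (N * ∫⁻ γ', k (γ - γ') * b γ') := by
                    exact mul_le_mul_left (hag z γ) _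
                _ = (a z * N * g (z - γ)) * (b γ * ∫⁻ γ', k (γ - γ') * b γ') := by ring
                _ ≤ (a z * N * g (z - γ)) * K := by gcongr; exact hb γ
                _ = _ := by ring
          _ = (a z * (N * K)) * ∫⁻ γ, g (z - γ) := lintegral_const_mul _ (by fun_prop)
          _ ≤ (a z * (N * K)) * N := by gcongr; exact hg z
          _ = _ := by ring
    _ = (∫⁻ z, a z) * (N * (N * K)) := lintegral_mul_const _ ma
    _ ≤ V * (N * (N * K)) := by gcongr
    _ = _ := by ring

/-- The variables `y` and `y'` are integrated out by `lintegral_pair_le`, the other four by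
`inner_le`. -/
theorem sixfold_le {a b k g : E2 → ENNReal} (ma : Measurable a) (mb : Measurable b)
    (mk : Measurable k) (mg : Measurable g) (K N V : ENNReal)
    (ha1 : ∀ z, a z ≤ 1)
    (ha : ∀ z, a z * ∫⁻ y, a y * k (y - z) ≤ a z * K)
    (hb : ∀ γ, b γ * ∫⁻ γ', k (γ - γ') * b γ' ≤ K)
    (hag : ∀ z γ, a z * g (z - γ) ≤ b γ * (a z * g (z - γ)))
    (hg : ∀ z, ∫⁻ γ, g (z - γ) ≤ N) (hg' : ∀ γ, ∫⁻ z, g (z - γ) ≤ N)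
    (haV : ∫⁻ z, a z ≤ V) :
    ∫⁻ y, ∫⁻ z, ∫⁻ y', ∫⁻ z', ∫⁻ γ, ∫⁻ γ',
      (a y * a z * k (y - z)) * ((a y' * a z' * k (y' - z')) *
        (k (γ - γ') * g (z - γ) * g (z' - γ'))) ≤ K * (K * (N * N * K * V)) := by
  have mJ := measurable_inner mk mg
  have mJ1 : ∀ z, Measurable fun z' =>
      ∫⁻ γ, ∫⁻ γ', k (γ - γ') * g (z - γ) * g (z' - γ') := fun z =>
    mJ.comp (measurable_const.prodMk measurable_id)
  have mJ2 : ∀ z z', Measurable fun γ => ∫⁻ γ', k (γ - γ') * g (z - γ) * g (z' - γ') :=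
    fun z z' => Measurable.lintegral_prod_right' (f := fun q : E2 × E2 =>
            k (q.1 - q.2) * g (z - q.1) * g (z' - q.2)) (by fun_prop)
  have mJ3 : Measurable fun z => ∫⁻ z', a z' *
      ∫⁻ γ, ∫⁻ γ', k (γ - γ') * g (z - γ) * g (z' - γ') :=
    Measurable.lintegral_prod_right' (f := fun q : E2 × E2 => a q.2 *
      ∫⁻ γ, ∫⁻ γ', k (γ - γ') * g (q.1 - γ) * g (q.2 - γ')) (by fun_prop)
  have mJ4 : ∀ z, Measurable fun y' => ∫⁻ z', (a y' * a z' * k (y' - z')) *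
      ∫⁻ γ, ∫⁻ γ', k (γ - γ') * g (z - γ) * g (z' - γ') := fun z => by
    have := mJ1 z
    exact Measurable.lintegral_prod_right' (f := fun q : E2 × E2 =>
      (a q.1 * a q.2 * k (q.1 - q.2)) *
      ∫⁻ γ, ∫⁻ γ', k (γ - γ') * g (z - γ) * g (q.2 - γ')) (by fun_prop)
  have e : ∀ y z, (∫⁻ y', ∫⁻ z', ∫⁻ γ, ∫⁻ γ',
      (a y * a z * k (y - z)) * ((a y' * a z' * k (y' - z')) *
        (k (γ - γ') * g (z - γ) * g (z' - γ')))) = (a y * a z * k (y - z)) *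
        ∫⁻ y', ∫⁻ z', (a y' * a z' * k (y' - z')) *
          ∫⁻ γ, ∫⁻ γ', k (γ - γ') * g (z - γ) * g (z' - γ') := by
    intro y z
    rw [← lintegral_const_mul _ (mJ4 z)]
    refine lintegral_congr fun y' => ?_
    have := mJ1 z
    rw [← lintegral_const_mul _ (by fun_prop)]
    refine lintegral_congr fun z' => ?_
    have := mJ2 z z'
    rw [← mul_assoc, ← lintegral_const_mul _ this]
    refine lintegral_congr fun γ => ?_
    rw [← lintegral_const_mul _ (by fun_prop)]
    refine lintegral_congr fun γ' => ?_
    ring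
  simp_rw [e]
  calc _ ≤ ∫⁻ y, ∫⁻ z, a y * a z * k (y - z) * (K * ∫⁻ z', a z' *
          ∫⁻ γ, ∫⁻ γ', k (γ - γ') * g (z - γ) * g (z' - γ')) := by
        refine lintegral_mono fun y => lintegral_mono fun z => ?_
        gcongr
        exact lintegral_pair_le ma mk (mJ1 z) K ha
    _ ≤ K * ∫⁻ z, a z * (K * ∫⁻ z', a z' *
          ∫⁻ γ, ∫⁻ γ', k (γ - γ') * g (z - γ) * g (z' - γ')) :=
        lintegral_pair_le ma mk (by fun_prop) K ha
    _ = K * (K * ∫⁻ z, a z * ∫⁻ z', a z' *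
          ∫⁻ γ, ∫⁻ γ', k (γ - γ') * g (z - γ) * g (z' - γ')) := by
        congr 1
        rw [← lintegral_const_mul K (by fun_prop)]
        exact lintegral_congr fun z => mul_left_comm _ _ _
    _ ≤ _ := by
        gcongr
        exact inner_le ma mb mk mg K N V ha1 hb hag hg hg' haV

/-! ### Application to the wave kernel -/

/-- `phi t R s` is supported in the ball of radius `R + t ≤ 2 * R` and bounded by the mass of the
wave kernel. -/
theorem enorm_phi_le {t R s T : ℝ} (hs : 0 ≤ s) (htT : t ≤ T) (hTR : T ≤ R) (y : E2) :
    ‖phi t R s y‖ₑ ≤ (ENNReal.ofReal T * ∫⁻ x : E2, ENNReal.ofReal (G 1 x)) *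
      (Metric.closedBall (0 : E2) (2 * R)).indicator 1 y := by
  have h0 : ‖phi t R s y‖ₑ ≤ ∫⁻ x in Metric.closedBall (0 : E2) R,
      ENNReal.ofReal (G (t - s) (x - y)) := by
    refine (enorm_integral_le_lintegral_enorm _).trans (le_of_eq ?_)
    refine lintegral_congr fun x => ?_
    rw [Real.enorm_of_nonneg (G_nonneg _ _)]
  refine h0.trans ?_
  by_cases hy : y ∈ Metric.closedBall (0 : E2) (2 * R)
  · rw [Set.indicator_of_mem hy, Pi.one_apply, mul_one]
    calc _ ≤ ∫⁻ x, ENNReal.ofReal (G (t - s) (x - y)) := setLIntegral_le_lintegral _ _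
      _ = ∫⁻ x, ENNReal.ofReal (G (t - s) x) :=
          lintegral_sub_right_eq_self (fun x => ENNReal.ofReal (G (t - s) x)) y
      _ ≤ _ := lintegral_G_le _
      _ ≤ _ := by gcongr; linarith
  · rw [Set.indicator_of_notMem hy, mul_zero, nonpos_iff_eq_zero]
    rw [setLIntegral_congr_fun (g := fun _ => 0) measurableSet_closedBall]
    · simp
    intro x hx
    simp only [Metric.mem_closedBall, dist_zero_right] at hx hy
    have h1 : ‖y‖ ≤ ‖x‖ + ‖x - y‖ := by
      have := norm_sub_le x (x - y); simpa using this
    simp only [G]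
    rw [if_neg (by linarith)]
    simp

/-- If `y` and `w` lie in the ball of radius `ρ`, then `y - w` lies in the ball of radius `2 * ρ`. -/
theorem riesz_ball_le {β ρ : ℝ} (w : E2) (hw : w ∈ Metric.closedBall (0 : E2) ρ) :
    ∫⁻ y, (Metric.closedBall (0 : E2) ρ).indicator 1 y * ENNReal.ofReal (‖y - w‖ ^ (-β)) ≤
      ∫⁻ x in Metric.closedBall (0 : E2) (2 * ρ), ENNReal.ofReal (‖x‖ ^ (-β)) := by
  rw [← lintegral_indicator measurableSet_closedBall,
    ← lintegral_sub_right_eq_self (Set.indicator _ _) w]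
  refine lintegral_mono fun y => ?_
  by_cases hy : y ∈ Metric.closedBall (0 : E2) ρ
  · have : y - w ∈ Metric.closedBall (0 : E2) (2 * ρ) := by
      simp only [Metric.mem_closedBall, dist_zero_right] at *
      have := norm_sub_le y w
      linarith
    simp [Set.indicator_of_mem hy, Set.indicator_of_mem this]
  · simp [Set.indicator_of_notMem hy]

/-- `sixfold_le` with `a`, `b` the indicators of the balls of radius `2 * R` and `3 * R`; both
Riesz integrals are bounded by the one over the ball of radius `6 * R`. -/
theorem kernel_sixfold_le {β u T R : ℝ} (hR : 0 < R) (huT : u ≤ T) (hTR : T ≤ R) :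
    let a : E2 → ENNReal := (Metric.closedBall (0 : E2) (2 * R)).indicator 1
    let k : E2 → ENNReal := fun x => ENNReal.ofReal (‖x‖ ^ (-β))
    let g : E2 → ENNReal := fun x => ENNReal.ofReal (G u x)
    let K : ENNReal := ∫⁻ x in Metric.closedBall (0 : E2) (6 * R), k x
    let N : ENNReal := ENNReal.ofReal T * ∫⁻ x : E2, ENNReal.ofReal (G 1 x)
    ∫⁻ y, ∫⁻ z, ∫⁻ y', ∫⁻ z', ∫⁻ γ, ∫⁻ γ',
      (a y * a z * k (y - z)) * ((a y' * a z' * k (y' - z')) *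
        (k (γ - γ') * g (z - γ) * g (z' - γ'))) ≤
      K * (K * (N * N * K * volume (Metric.closedBall (0 : E2) (2 * R)))) := by
  intro a k g K N
  have hgN : ∫⁻ x, g x ≤ N := (lintegral_G_le u).trans (mul_le_mul_left
    (ENNReal.ofReal_le_ofReal huT) _)
  refine sixfold_le (b := (Metric.closedBall (0 : E2) (3 * R)).indicator 1)
    (measurable_one.indicator measurableSet_closedBall)
    (measurable_one.indicator measurableSet_closedBall)
    (by fun_prop) (measurable_G u).ennreal_ofReal K N _ ?_ ?_ ?_ ?_ ?_ ?_ ?_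
  · intro z
    exact Set.indicator_le_self' (fun _ _ => zero_le_one) z
  · intro z
    by_cases hz : z ∈ Metric.closedBall (0 : E2) (2 * R)
    · refine mul_le_mul_right ((riesz_ball_le z hz).trans ?_) _
      exact lintegral_mono_set (Metric.closedBall_subset_closedBall (by linarith))
    · simp [Set.indicator_of_notMem hz]
  · intro γ
    by_cases hγ : γ ∈ Metric.closedBall (0 : E2) (3 * R)
    · rw [Set.indicator_of_mem hγ, Pi.one_apply, one_mul]
      refine le_trans (le_of_eq ?_) ((riesz_ball_le γ hγ).trans
        (lintegral_mono_set (Metric.closedBall_subset_closedBall (by linarith))))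
      refine lintegral_congr fun γ' => ?_
      simp only [k]
      rw [mul_comm, norm_sub_rev]
    · simp [Set.indicator_of_notMem hγ]
  · intro z γ
    by_cases hγ : γ ∈ Metric.closedBall (0 : E2) (3 * R)
    · simp [Set.indicator_of_mem hγ]
    by_cases hz : z ∈ Metric.closedBall (0 : E2) (2 * R)
    · have : ENNReal.ofReal (G u (z - γ)) = 0 := by
        simp only [Metric.mem_closedBall, dist_zero_right] at hz hγ
        have h1 : ‖γ‖ ≤ ‖z‖ + ‖z - γ‖ := by
          have := norm_sub_le z (z - γ); simpa using this
        simp only [G]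
        rw [if_neg (by linarith)]
        simp
      rw [this]; simp
    · simp [Set.indicator_of_notMem hz]
  · intro z
    rw [lintegral_sub_left_eq_self g z]
    exact hgN
  · intro γ
    rw [lintegral_sub_right_eq_self g γ]
    exact hgN
  · rw [lintegral_indicator_one measurableSet_closedBall]

theorem enorm_integrand_le {β t₁ t₂ R s r : ℝ} (ht₁ : 0 < t₁) (ht₂ : 0 < t₂) (hs : 0 < s)
    (hR : t₁ + t₂ ≤ R) (y z y' z' γ γ' : E2) :
    let a : E2 → ENNReal := (Metric.closedBall (0 : E2) (2 * R)).indicator 1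
    let k : E2 → ENNReal := fun x => ENNReal.ofReal (‖x‖ ^ (-β))
    let g : E2 → ENNReal := fun x => ENNReal.ofReal (G (s - r) x)
    let N : ENNReal := ENNReal.ofReal (t₁ + t₂) * ∫⁻ x : E2, ENNReal.ofReal (G 1 x)
    ‖phi t₁ R s y * phi t₂ R s z * phi t₁ R s y' * phi t₂ R s z' *
            ‖y - z‖ ^ (-β) * ‖y' - z'‖ ^ (-β) * ‖γ - γ'‖ ^ (-β) *
            G (s - r) (z - γ) * G (s - r) (z' - γ')‖ₑ ≤
      N ^ 4 * ((a y * a z * k (y - z)) * ((a y' * a z' * k (y' - z')) *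
        (k (γ - γ') * g (z - γ) * g (z' - γ')))) := by
  intro a k g N
  have h1 : ∀ y, ‖phi t₁ R s y‖ₑ ≤ N * a y := enorm_phi_le hs.le (by linarith) hR
  have h2 : ∀ y, ‖phi t₂ R s y‖ₑ ≤ N * a y := enorm_phi_le hs.le (by linarith) hR
  have hk : ∀ x : E2, ‖‖x‖ ^ (-β)‖ₑ = k x := fun x => Real.enorm_of_nonneg (by positivity)
  have hg : ∀ x : E2, ‖G (s - r) x‖ₑ = g x := fun x => Real.enorm_of_nonneg (G_nonneg _ _)
  simp only [enorm_mul, hk, hg]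
  calc _ ≤ (N * a y) * (N * a z) * (N * a y') * (N * a z') * k (y - z) * k (y' - z') *
        k (γ - γ') * g (z - γ) * g (z' - γ') := by
        gcongr
        exacts [h1 y, h2 z, h1 y', h2 z']
    _ = _ := by ring

/-- No measurability or integrability of `f` is needed, since the Bochner integral takes the value
`0` on non-integrable functions. -/
theorem enorm_integral_le_mul {f : E2 → ℝ} {c : ENNReal} (hc : c ≠ ⊤) {F : E2 → ENNReal}
    (h : ∀ x, ‖f x‖ₑ ≤ c * F x) : ‖∫ x, f x‖ₑ ≤ c * ∫⁻ x, F x :=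
  (enorm_integral_le_lintegral_enorm _).trans
    ((lintegral_mono h).trans (lintegral_const_mul' _ _ hc).le)

/-- For `β ∈ (0,2)` and `t₁, t₂ > 0` there is a constant `C` (depending only on `β, t₁, t₂`)
such that for all `R ≥ t₁ + t₂` and all `s ∈ (0, min(t₁,t₂)]`, `𝒯_s(R) ≤ C R^{8-3β}`. -/
theorem stmt_18 (β t₁ t₂ : ℝ) (hβ0 : 0 < β) (hβ2 : β < 2) (ht₁ : 0 < t₁) (ht₂ : 0 < t₂) :
    ∃ C : ℝ, ∀ R s : ℝ, t₁ + t₂ ≤ R → 0 < s → s ≤ min t₁ t₂ →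
      (∫ r in (0:ℝ)..s, ∫ y : E2, ∫ z : E2, ∫ y' : E2, ∫ z' : E2, ∫ γ : E2, ∫ γ' : E2,
          phi t₁ R s y * phi t₂ R s z * phi t₁ R s y' * phi t₂ R s z' *
            ‖y - z‖ ^ (-β) * ‖y' - z'‖ ^ (-β) * ‖γ - γ'‖ ^ (-β) *
            G (s - r) (z - γ) * G (s - r) (z' - γ')) ≤
        C * R ^ (8 - 3 * β) := by
  set N : ENNReal := ENNReal.ofReal (t₁ + t₂) * ∫⁻ x : E2, ENNReal.ofReal (G 1 x) with hN
  set K₁ : ENNReal := ∫⁻ x in Metric.closedBall (0 : E2) 1, ENNReal.ofReal (‖x‖ ^ (-β)) with hK₁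
  have hNt : N ≠ ⊤ := ENNReal.mul_ne_top ENNReal.ofReal_ne_top lintegral_G_one_lt_top.ne
  have hKt : K₁ ≠ ⊤ := (lintegral_riesz_lt_top hβ2).ne
  have hVt : volume (Metric.closedBall (0 : E2) 1) ≠ ⊤ := measure_closedBall_lt_top.ne
  set D : ENNReal := N ^ 6 * K₁ ^ 3 * volume (Metric.closedBall (0 : E2) 1) *
    ENNReal.ofReal ((6 : ℝ) ^ (2 - β) * 6 ^ (2 - β) * 6 ^ (2 - β) * 4 * t₁) with hD
  have hDt : D ≠ ⊤ := by
    refine ENNReal.mul_ne_top (ENNReal.mul_ne_top (ENNReal.mul_ne_top ?_ ?_) hVt)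
      ENNReal.ofReal_ne_top
    exacts [ENNReal.pow_ne_top hNt, ENNReal.pow_ne_top hKt]
  refine ⟨D.toReal, fun R s hR hs hst => ?_⟩
  have hs1 : s ≤ t₁ := hst.trans (min_le_left _ _)
  have hR0 : 0 < R := by linarith
  have hK : ∫⁻ x in Metric.closedBall (0 : E2) (6 * R), ENNReal.ofReal (‖x‖ ^ (-β)) =
      ENNReal.ofReal (6 ^ (2 - β) * R ^ (2 - β)) * K₁ := by
    rw [lintegral_riesz_scaling (by positivity), Real.mul_rpow (by norm_num) hR0.le]
  have hV : volume (Metric.closedBall (0 : E2) (2 * R)) =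
      ENNReal.ofReal (4 * R ^ 2) * volume (Metric.closedBall (0 : E2) 1) := by
    rw [Measure.addHaar_closedBall' _ _ (by positivity)]
    congr 2
    simp; ring
  rw [intervalIntegral.integral_of_le hs.le]
  set I := ∫ r in Set.Ioc 0 s, ∫ y : E2, ∫ z : E2, ∫ y' : E2, ∫ z' : E2, ∫ γ : E2, ∫ γ' : E2,
          phi t₁ R s y * phi t₂ R s z * phi t₁ R s y' * phi t₂ R s z' *
            ‖y - z‖ ^ (-β) * ‖y' - z'‖ ^ (-β) * ‖γ - γ'‖ ^ (-β) *
            G (s - r) (z - γ) * G (s - r) (z' - γ') with hI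
  have hN4 : N ^ 4 ≠ ⊤ := ENNReal.pow_ne_top hNt
  have main : ‖I‖ₑ ≤ D * ENNReal.ofReal (R ^ (8 - 3 * β)) := by
    set K : ENNReal := ∫⁻ x in Metric.closedBall (0 : E2) (6 * R), ENNReal.ofReal (‖x‖ ^ (-β))
    set V : ENNReal := volume (Metric.closedBall (0 : E2) (2 * R))
    calc ‖I‖ₑ ≤ ∫⁻ r in Set.Ioc 0 s, N ^ 4 * (K * (K * (N * N * K * V))) := by
          refine (enorm_integral_le_lintegral_enorm _).trans ?_
          refine setLIntegral_mono measurable_const fun r hr => ?_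
          refine le_trans ?_ (mul_le_mul_right (kernel_sixfold_le (β := β) (u := s - r) hR0
            (by linarith [hr.1]) hR) (N ^ 4))
          refine enorm_integral_le_mul hN4 fun y => enorm_integral_le_mul hN4 fun z =>
            enorm_integral_le_mul hN4 fun y' => enorm_integral_le_mul hN4 fun z' =>
            enorm_integral_le_mul hN4 fun γ => enorm_integral_le_mul hN4 fun γ' => ?_
          exact enorm_integrand_le ht₁ ht₂ hs hR y z y' z' γ γ'
      _ = N ^ 4 * (K * (K * (N * N * K * V))) * ENNReal.ofReal s := by
          rw [setLIntegral_const, Real.volume_Ioc, sub_zero]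
      _ ≤ N ^ 4 * (K * (K * (N * N * K * V))) * ENNReal.ofReal t₁ := by gcongr
      _ = N ^ 6 * K₁ ^ 3 * volume (Metric.closedBall (0 : E2) 1) *
          (ENNReal.ofReal (6 ^ (2 - β) * R ^ (2 - β)) * ENNReal.ofReal (6 ^ (2 - β) * R ^ (2 - β)) *
           ENNReal.ofReal (6 ^ (2 - β) * R ^ (2 - β)) * ENNReal.ofReal (4 * R ^ 2) *
            ENNReal.ofReal t₁) := by rw [hK, hV]; ring
      _ = D * ENNReal.ofReal (R ^ (8 - 3 * β)) := by
          rw [hD, mul_assoc (N ^ 6 * K₁ ^ 3 * volume (Metric.closedBall (0 : E2) 1))]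
          congr 1
          rw [← ENNReal.ofReal_mul (by positivity), ← ENNReal.ofReal_mul (by positivity),
            ← ENNReal.ofReal_mul (by positivity), ← ENNReal.ofReal_mul (by positivity),
            ← ENNReal.ofReal_mul (by positivity)]
          congr 1
          have : R ^ (8 - 3 * β) = R ^ (2 - β) * R ^ (2 - β) * R ^ (2 - β) * R ^ 2 := by
            rw [← Real.rpow_natCast, ← Real.rpow_add hR0, ← Real.rpow_add hR0,
              ← Real.rpow_add hR0]
            congr 1; push_cast; ring
          rw [this]; ring
  calc I ≤ ‖I‖ := Real.le_norm_self I
    _ = ‖I‖ₑ.toReal := (toReal_enorm I).symm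
    _ ≤ (D * ENNReal.ofReal (R ^ (8 - 3 * β))).toReal :=
        ENNReal.toReal_mono (ENNReal.mul_ne_top hDt ENNReal.ofReal_ne_top) main
    _ = D.toReal * R ^ (8 - 3 * β) := by
        rw [ENNReal.toReal_mul, ENNReal.toReal_ofReal (by positivity)]
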